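/- There is an absolute constant c > 0 such that the following holds for all sufficiently large n. Let 0 < p < 1 and suppose that G is an n-vertex (ε,s)-expander with 2^{-100} < ε < 1 and s ≥ 20·p^{-3}·(log n)^{13}. Let U ⊆ V(G) satisfy |N_G(U)| ≥ |U|·p^{-4}·(log n)^{24}, and let F ⊆ E(G) satisfy |F| ≤ |U|. Let V be a p-random subset of V(G). Then, with probability at least 1 − e^{−c·|U|·(log n)^2}, we have |B^{(log n)^4}_{G−F}(U, V)| > |V|/2. -/

import Mathlib

/-- The external neighbourhood of a vertex set `U` in a graph `G`. -/
def extNbhd {α : Type*} (G : SimpleGraph α) (U : Set α) : Set α :=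
  {v | v ∉ U ∧ ∃ u ∈ U, G.Adj u v}

/-- `G`, regarded as an `n`-vertex graph, is an `(ε, s)`-expander. -/
def IsExpander {α : Type*} (n : ℕ) (G : SimpleGraph α) (ε s : ℝ) : Prop :=
  ∀ (U : Set α) (F : Set (Sym2 α)), F ⊆ G.edgeSet →
    1 ≤ U.ncard → (U.ncard : ℝ) ≤ 2 / 3 * n → (F.ncard : ℝ) ≤ s * U.ncard →
    ε * U.ncard / Real.logb 2 n ^ 2 ≤ ((extNbhd (G.deleteEdges F) U).ncard : ℝ)

/-- `ball G ℓ U V` is the set of vertices of `V` reachable by a path of length at most `ℓ`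
which starts at a vertex of `U` and has all its internal vertices in `V`. -/
def ball {α : Type*} (G : SimpleGraph α) (ℓ : ℝ) (U V : Set α) : Set α :=
  {v | v ∈ V ∧ ∃ u ∈ U, ∃ w : G.Walk u v, w.IsPath ∧ ((w.length : ℝ) ≤ ℓ) ∧
    ∀ z ∈ w.support, z ≠ u → z ≠ v → z ∈ V}

/-- The probability, under the distribution of a `p`-random subset of `Fin n`, of `E`. -/
noncomputable def bernoulliProb (n : ℕ) (p : ℝ) (E : Set (Finset (Fin n))) : ℝ :=
  ∑ S : Finset (Fin n),
    E.indicator (fun A => p ^ A.card * (1 - p) ^ (n - A.card)) S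

/-!
Expose the random set in about `(log n)⁴` rounds of density `p / (100 (log n)⁴)` and a last round of
density close to `p`. Let `B` be the set reached so far, with `|U| ≪ |B| ≤ 2n/3`. By expansion, even
after deleting `F`, one can choose many edges leaving `B` while using at most `d ≈ 100 (log n)⁴ / p`
of them at any vertex. The cap `d` has two effects: a new vertex is reached in the next round with
probability proportional to its number of chosen edges, so `|B|` grows on average by a factor
`1 + Ω(ε / (log n)²)`; and the number of new vertices changes by at most `d` when one vertex of `B`
is resampled, so the bounded differences inequality makes this growth overwhelmingly likely. After
all these rounds more than `2n/3` vertices have been reached, and the last round retains nearly two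
thirds of the `p n` vertices of the random set among them.
-/

open Finset

/-! ### Random subsets of a finite set -/

section RandomSubset

variable {α : Type*} {p q r : ℝ}

/-- The expectation functional of a `p`-random subset of `T`: it maps `f` to the mean of `f S`,
where `S` contains each element of `T` independently with probability `p`. -/
noncomputable def subsetExp (p : ℝ) (T : Finset α) : (Finset α → ℝ) →ₗ[ℝ] ℝ :=
  ∑ S ∈ T.powerset, (p ^ #S * (1 - p) ^ (#T - #S)) • LinearMap.proj S

/-- The probability that a `p`-random subset of `T` belongs to the family `E`. -/
noncomputable def subsetProb (p : ℝ) (T : Finset α) (E : Set (Finset α)) : ℝ :=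
  subsetExp p T (E.indicator 1)

lemma subsetExp_apply (p : ℝ) (T : Finset α) (f : Finset α → ℝ) :
    subsetExp p T f = ∑ S ∈ T.powerset, p ^ #S * (1 - p) ^ (#T - #S) * f S := by
  simp [subsetExp]

lemma bernoulliProb_eq_subsetProb (n : ℕ) (p : ℝ) (E : Set (Finset (Fin n))) :
    bernoulliProb n p E = subsetProb p univ E := by
  classical
  simp [bernoulliProb, subsetProb, subsetExp_apply, Set.indicator_apply]

@[simp]
lemma subsetExp_empty (p : ℝ) (f : Finset α → ℝ) : subsetExp p ∅ f = f ∅ := by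
  simp [subsetExp_apply]

lemma subsetExp_insert [DecidableEq α] {a : α} {T : Finset α} (ha : a ∉ T) (p : ℝ)
    (f : Finset α → ℝ) :
    subsetExp p (insert a T) f =
      (1 - p) * subsetExp p T f + p * subsetExp p T (fun S => f (insert a S)) := by
  simp only [subsetExp_apply, sum_powerset_insert ha, mul_sum]
  congr 1 <;> refine sum_congr rfl fun S hS => ?_
  · rw [card_insert_of_notMem ha, Nat.succ_sub (card_le_card (mem_powerset.1 hS)), pow_succ]
    ring
  · rw [card_insert_of_notMem ha, card_insert_of_notMem fun h => ha (mem_powerset.1 hS h),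
      Nat.add_sub_add_right, pow_succ]
    ring

@[simp]
lemma subsetExp_const (p : ℝ) (T : Finset α) (c : ℝ) : subsetExp p T (fun _ => c) = c := by
  classical
  induction T using Finset.induction_on with
  | empty => simp
  | insert a T ha ih => rw [subsetExp_insert ha, ih]; ring

lemma subsetExp_mono (hp0 : 0 ≤ p) (hp1 : p ≤ 1) {T : Finset α} {f g : Finset α → ℝ}
    (hfg : ∀ S, f S ≤ g S) : subsetExp p T f ≤ subsetExp p T g := by
  simp only [subsetExp_apply]
  have := sub_nonneg.2 hp1
  gcongr
  exact hfg _

lemma subsetExp_union [DecidableEq α] (q r : ℝ) (T : Finset α) (f : Finset α → ℝ) :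
    subsetExp (1 - (1 - q) * (1 - r)) T f =
      subsetExp q T fun A => subsetExp r T fun C => f (A ∪ C) := by
  induction T using Finset.induction_on generalizing f with
  | empty => simp
  | insert a T ha ih =>
    have insert_absorb (A C : Finset α) : insert a (insert a (A ∪ C)) = insert a (A ∪ C) :=
      insert_eq_of_mem (mem_insert_self a _)
    have expand (A : Finset α) : subsetExp r (insert a T) (fun C => f (A ∪ C)) =
        (1 - r) * subsetExp r T (fun C => f (A ∪ C)) +
          r * subsetExp r T (fun C => f (insert a (A ∪ C))) := by
      simp only [subsetExp_insert ha, union_insert]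
    have linear (u v : ℝ) (g h : Finset α → ℝ) : subsetExp q T (fun A => u * g A + v * h A) =
        u * subsetExp q T g + v * subsetExp q T h := by
      change subsetExp q T (u • g + v • h) = _
      simp only [map_add, map_smul, smul_eq_mul]
    simp only [expand, subsetExp_insert ha, ih, insert_union, insert_absorb, linear]
    ring

lemma subsetProb_mono (hp0 : 0 ≤ p) (hp1 : p ≤ 1) {T : Finset α} {E E' : Set (Finset α)}
    (h : E ⊆ E') : subsetProb p T E ≤ subsetProb p T E' :=
  subsetExp_mono hp0 hp1 (Set.indicator_le_indicator_of_subset h fun _ => zero_le_one)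

lemma subsetProb_nonneg (hp0 : 0 ≤ p) (hp1 : p ≤ 1) (T : Finset α) (E : Set (Finset α)) :
    0 ≤ subsetProb p T E :=
  (subsetExp_const p T 0).ge.trans <|
    subsetExp_mono hp0 hp1 fun _ => Set.indicator_nonneg (fun _ _ => zero_le_one) _

lemma subsetProb_compl (p : ℝ) (T : Finset α) (E : Set (Finset α)) :
    subsetProb p T Eᶜ = 1 - subsetProb p T E := by
  rw [subsetProb, Set.indicator_compl, map_sub]
  exact congrArg (· - _) (subsetExp_const p T 1)

lemma subsetProb_union_le (hp0 : 0 ≤ p) (hp1 : p ≤ 1) (T : Finset α) (E E' : Set (Finset α)) :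
    subsetProb p T (E ∪ E') ≤ subsetProb p T E + subsetProb p T E' := by
  simp only [subsetProb, ← map_add]
  refine subsetExp_mono hp0 hp1 fun S => ?_
  by_cases h : S ∈ E <;> by_cases h' : S ∈ E' <;> simp [h, h']

lemma subsetProb_le_one (hp0 : 0 ≤ p) (hp1 : p ≤ 1) (T : Finset α) (E : Set (Finset α)) :
    subsetProb p T E ≤ 1 := by
  have := subsetProb_compl p T E
  have := subsetProb_nonneg hp0 hp1 T Eᶜ
  linarith

lemma subsetProb_union_round_le [DecidableEq α] {T : Finset α} {E E' : Set (Finset α)} {δ : ℝ}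
    (hq0 : 0 ≤ q) (hq1 : q ≤ 1) (hr0 : 0 ≤ r) (hr1 : r ≤ 1) (hδ : 0 ≤ δ)
    (h : ∀ A ∉ E, subsetProb r T {S | A ∪ S ∈ E'} ≤ δ) :
    subsetProb (1 - (1 - q) * (1 - r)) T E' ≤ subsetProb q T E + δ := by
  calc subsetProb (1 - (1 - q) * (1 - r)) T E'
      = subsetExp q T fun A => subsetProb r T {S | A ∪ S ∈ E'} := subsetExp_union q r T _
    _ ≤ subsetExp q T (E.indicator 1 + fun _ => δ) := subsetExp_mono hq0 hq1 fun A => ?_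
    _ = subsetProb q T E + δ := by rw [map_add, subsetExp_const]; rfl
  by_cases hA : A ∈ E
  · simpa [hA] using (subsetProb_le_one hr0 hr1 T _).trans (le_add_of_nonneg_right hδ)
  · simpa [hA] using h A hA

lemma subsetExp_zero (T : Finset α) (f : Finset α → ℝ) : subsetExp 0 T f = f ∅ := by
  classical
  induction T using Finset.induction_on with
  | empty => simp
  | insert a T ha ih => rw [subsetExp_insert ha, ih]; ring

lemma subsetProb_disjoint [DecidableEq α] (p : ℝ) (T K : Finset α) :
    subsetProb p T {S | Disjoint S K} = (1 - p) ^ #(T ∩ K) := by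
  unfold subsetProb
  induction T using Finset.induction_on with
  | empty => simp
  | insert a T ha ih =>
    rw [subsetExp_insert ha, ih]
    by_cases haK : a ∈ K
    · have : (fun S => ({S | Disjoint S K}.indicator 1 (insert a S) : ℝ)) = fun _ => 0 := by
        ext S; simp [haK]
      rw [this, subsetExp_const, insert_inter_of_mem haK, card_insert_of_notMem (by simp [ha]),
        pow_succ]
      ring
    · have : (fun S => ({S | Disjoint S K}.indicator 1 (insert a S) : ℝ)) =
          {S | Disjoint S K}.indicator 1 := by
        ext S; simp [Set.indicator_apply, haK]
      rw [this, ih, insert_inter_of_notMem haK]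
      ring

end RandomSubset

/-! ### The bounded differences inequality -/

section BoundedDifferences

open ProbabilityTheory MeasureTheory Real

variable {α : Type*} [DecidableEq α] {p t Q : ℝ} {T : Finset α} {f : Finset α → ℝ} {D : α → ℝ}

lemma exp_mix_le_exp_mix_add_sq (hp0 : 0 ≤ p) (hp1 : p ≤ 1) (x y : ℝ) :
    (1 - p) * exp x + p * exp y ≤ exp ((1 - p) * x + p * y + (y - x) ^ 2 / 8) := by
  let μ : Measure ℝ := bernoulliMeasure y x ⟨p, hp0, hp1⟩
  have range : ∀ᵐ z ∂μ, z ∈ Set.Icc (x ⊓ y) (x ⊔ y) := by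
    simp [μ, bernoulliMeasure_def, ae_add_measure_iff, Measure.ae_smul_measure]
  have hoeffding := (hasSubgaussianMGF_of_mem_Icc aemeasurable_id range).mgf_le 1
  simp only [mgf, μ, integral_bernoulliMeasure, id, one_mul, smul_eq_mul, NNReal.coe_pow,
    NNReal.coe_div, coe_nnnorm, norm_eq_abs, NNReal.coe_ofNat, max_sub_min_eq_abs', div_pow,
    sq_abs] at hoeffding
  set m := p * y + (1 - p) * x
  calc (1 - p) * exp x + p * exp y
      = exp m * (p * exp (y - m) + (1 - p) * exp (x - m)) := by
        simp only [exp_sub]; field_simp; ring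
    _ ≤ exp m * exp ((x - y) ^ 2 / 2 ^ 2 * 1 ^ 2 / 2) := by gcongr
    _ = exp ((1 - p) * x + p * y + (y - x) ^ 2 / 8) := by
        rw [← exp_add]; simp only [m]; ring_nf

theorem subsetExp_exp_le (hp0 : 0 ≤ p) (hp1 : p ≤ 1)
    (hD : ∀ a S, |f (insert a S) - f S| ≤ D a) :
    subsetExp p T (fun S => exp (f S)) ≤ exp (subsetExp p T f + (∑ a ∈ T, D a ^ 2) / 8) := by
  induction T using Finset.induction_on generalizing f with
  | empty => simp
  | insert a T ha ih =>
    set σ := ∑ b ∈ T, D b ^ 2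
    set x := subsetExp p T f
    set y := subsetExp p T fun S => f (insert a S)
    have hxy : (y - x) ^ 2 ≤ D a ^ 2 := by
      have diff : y - x = subsetExp p T ((fun S => f (insert a S)) - f) := (map_sub ..).symm
      refine sq_le_sq' ?_ ?_ <;> rw [diff]
      · rw [← subsetExp_const p T (-D a)]
        exact subsetExp_mono hp0 hp1 fun S => (abs_le.1 (hD a S)).1
      · rw [← subsetExp_const p T (D a)]
        exact subsetExp_mono hp0 hp1 fun S => (abs_le.1 (hD a S)).2
    have ih_insert : subsetExp p T (fun S => exp (f (insert a S))) ≤ exp (y + σ / 8) :=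
      ih fun b S => by rw [insert_comm]; exact hD b (insert a S)
    have := sub_nonneg.2 hp1
    rw [subsetExp_insert ha, subsetExp_insert ha, sum_insert ha]
    calc (1 - p) * subsetExp p T (fun S => exp (f S))
          + p * subsetExp p T (fun S => exp (f (insert a S)))
        ≤ (1 - p) * exp (x + σ / 8) + p * exp (y + σ / 8) := by gcongr; exact ih hD
      _ ≤ exp ((1 - p) * (x + σ / 8) + p * (y + σ / 8) + (y + σ / 8 - (x + σ / 8)) ^ 2 / 8) :=
        exp_mix_le_exp_mix_add_sq hp0 hp1 _ _
      _ ≤ exp ((1 - p) * x + p * y + (D a ^ 2 + σ) / 8) :=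
        exp_le_exp.2 (by linarith)

theorem subsetProb_add_le_le_exp (hp0 : 0 ≤ p) (hp1 : p ≤ 1) (ht : 0 ≤ t)
    (hD : ∀ a S, |f (insert a S) - f S| ≤ D a) (hQ : ∑ a ∈ T, D a ^ 2 ≤ Q) :
    subsetProb p T {S | subsetExp p T f + t ≤ f S} ≤ exp (-(2 * t ^ 2 / Q)) := by
  have hQ0 : 0 ≤ Q := (sum_nonneg fun a _ => sq_nonneg (D a)).trans hQ
  set μ := subsetExp p T f
  set l := 4 * t / Q
  have hl : 0 ≤ l := by positivity
  have markov : subsetProb p T {S | μ + t ≤ f S} ≤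
      exp (-(l * (μ + t))) * subsetExp p T fun S => exp (l * f S) := by
    rw [← smul_eq_mul, ← map_smul]
    refine subsetExp_mono hp0 hp1 fun S => Set.indicator_apply_le' (fun hS => ?_)
      fun _ => (mul_pos (exp_pos _) (exp_pos _)).le
    have : l * (μ + t) ≤ l * f S := by gcongr; exact hS
    simpa [← exp_add] using this
  have mgf_bound : subsetExp p T (fun S => exp (l * f S)) ≤
      exp (l * μ + (∑ a ∈ T, (l * D a) ^ 2) / 8) := by
    refine (subsetExp_exp_le hp0 hp1 fun a S => ?_).trans_eq
      (by rw [← smul_eq_mul l μ, ← map_smul]; rfl)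
    rw [← mul_sub, abs_mul, abs_of_nonneg hl]
    gcongr
    exact hD a S
  calc subsetProb p T {S | μ + t ≤ f S}
      ≤ exp (-(l * (μ + t))) * exp (l * μ + (∑ a ∈ T, (l * D a) ^ 2) / 8) :=
        markov.trans (by gcongr)
    _ = exp (-(l * t) + l ^ 2 * (∑ a ∈ T, D a ^ 2) / 8) := by
        rw [← exp_add, mul_sum]; simp only [mul_pow]; ring_nf
    _ ≤ exp (-(l * t) + l ^ 2 * Q / 8) := by gcongr
    _ = exp (-(2 * t ^ 2 / Q)) := by
        rcases eq_or_ne Q 0 with h | _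
        · simp [l, h]
        · simp only [l]; field_simp; ring_nf

theorem subsetProb_le_sub_le_exp (hp0 : 0 ≤ p) (hp1 : p ≤ 1) (ht : 0 ≤ t)
    (hD : ∀ a S, |f (insert a S) - f S| ≤ D a) (hQ : ∑ a ∈ T, D a ^ 2 ≤ Q) :
    subsetProb p T {S | f S ≤ subsetExp p T f - t} ≤ exp (-(2 * t ^ 2 / Q)) := by
  refine (subsetProb_mono hp0 hp1 fun S hS => ?_).trans
    (subsetProb_add_le_le_exp (f := -f) hp0 hp1 ht (fun a S => ?_) hQ)
  · rw [Set.mem_ofPred_eq] at hS ⊢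
    rw [map_neg, Pi.neg_apply]
    linarith
  · simpa only [Pi.neg_apply, neg_sub_neg, abs_sub_comm] using hD a S

end BoundedDifferences

/-! ### Hitting numbers of a random subset -/

section HitCount

open Real

variable {α ι : Type*} [DecidableEq α] {p t : ℝ}

/-- The number of indices `i ∈ I` for which the set `K i` meets `S`. -/
def hitCount (I : Finset ι) (K : ι → Finset α) (S : Finset α) : ℕ :=
  #{i ∈ I | ¬Disjoint S (K i)}

lemma subsetExp_hitCount (p : ℝ) (T : Finset α) (I : Finset ι) (K : ι → Finset α) :
    subsetExp p T (fun S => (hitCount I K S : ℝ)) = ∑ i ∈ I, (1 - (1 - p) ^ #(T ∩ K i)) := by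
  have indicators : (fun S => (hitCount I K S : ℝ)) =
      ∑ i ∈ I, {S | Disjoint S (K i)}ᶜ.indicator 1 := by
    ext S
    simp [hitCount, Set.indicator_apply, card_filter, apply_ite]
  rw [indicators, map_sum]
  refine sum_congr rfl fun i _ => ?_
  rw [← subsetProb_disjoint]
  exact subsetProb_compl p T _

lemma abs_hitCount_insert_sub_le (I : Finset ι) (K : ι → Finset α) (a : α) (S : Finset α) :
    |(hitCount I K (insert a S) : ℝ) - hitCount I K S| ≤ #{i ∈ I | a ∈ K i} := by
  classical
  have mono : hitCount I K S ≤ hitCount I K (insert a S) :=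
    card_le_card <| monotone_filter_right I fun _ _ =>
      mt (Disjoint.mono_left (subset_insert a S))
  have upper : hitCount I K (insert a S) ≤ hitCount I K S + #{i ∈ I | a ∈ K i} := by
    refine (card_le_card fun i => ?_).trans (card_union_le _ _)
    simp only [mem_filter, mem_union, disjoint_insert_left]
    tauto
  rw [abs_of_nonneg (by simpa using mono), sub_le_iff_le_add']
  exact_mod_cast upper

variable {B T : Finset α}

lemma card_inter_eq_hitCount (S B : Finset α) : #(S ∩ B) = hitCount B singleton S := by
  simp [hitCount, inter_comm S B, ← filter_mem_eq_inter]

lemma subsetExp_card_inter (hB : B ⊆ T) (p : ℝ) :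
    subsetExp p T (fun S => (#(S ∩ B) : ℝ)) = p * #B := by
  have hit (a : α) (ha : a ∈ B) : 1 - (1 - p) ^ #(T ∩ {a}) = p := by
    rw [inter_singleton_of_mem (hB ha), card_singleton, pow_one, sub_sub_cancel]
  simp_rw [card_inter_eq_hitCount _ B, subsetExp_hitCount, sum_congr rfl hit]
  simp [mul_comm]

lemma abs_card_inter_insert_sub_le (B : Finset α) (a : α) (S : Finset α) :
    |(#(insert a S ∩ B) : ℝ) - #(S ∩ B)| ≤ if a ∈ B then 1 else 0 := by
  simp only [card_inter_eq_hitCount]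
  refine (abs_hitCount_insert_sub_le B singleton a S).trans_eq ?_
  simp [filter_eq, apply_ite card]

lemma sum_sq_ite_mem_le (B T : Finset α) : ∑ a ∈ T, (if a ∈ B then 1 else 0 : ℝ) ^ 2 ≤ #B := by
  simpa using card_le_card (inter_subset_right : T ∩ B ⊆ B)

theorem subsetProb_card_inter_le_le_exp (hp0 : 0 ≤ p) (hp1 : p ≤ 1) (ht : 0 ≤ t) (hB : B ⊆ T) :
    subsetProb p T {S | (#(S ∩ B) : ℝ) ≤ p * #B - t} ≤ exp (-(2 * t ^ 2 / #B)) := by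
  rw [← subsetExp_card_inter hB]
  exact subsetProb_le_sub_le_exp hp0 hp1 ht (abs_card_inter_insert_sub_le B)
    (sum_sq_ite_mem_le B T)

theorem subsetProb_le_card_inter_le_exp (hp0 : 0 ≤ p) (hp1 : p ≤ 1) (ht : 0 ≤ t) (hB : B ⊆ T) :
    subsetProb p T {S | p * #B + t ≤ (#(S ∩ B) : ℝ)} ≤ exp (-(2 * t ^ 2 / #B)) := by
  rw [← subsetExp_card_inter hB]
  exact subsetProb_add_le_le_exp hp0 hp1 ht (abs_card_inter_insert_sub_le B)
    (sum_sq_ite_mem_le B T)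

lemma mul_div_three_le_one_sub_pow (hp0 : 0 ≤ p) (hp1 : p ≤ 1) {k : ℕ} (hk : p * k ≤ 2) :
    p * k / 3 ≤ 1 - (1 - p) ^ k := by
  have pow_le : (1 - p) ^ k ≤ (1 + p * k)⁻¹ :=
    calc (1 - p) ^ k ≤ exp (-p) ^ k := pow_le_pow_left₀ (by linarith) (one_sub_le_exp_neg p) k
      _ = (exp (p * k))⁻¹ := by rw [← exp_nat_mul, ← exp_neg]; ring_nf
      _ ≤ (1 + p * k)⁻¹ := by
          gcongr
          linarith [add_one_le_exp (p * k)]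
  have : (1 + p * k)⁻¹ ≤ 1 - p * k / 3 := by
    have : 0 ≤ p * k := by positivity
    rw [inv_le_iff_one_le_mul₀ (by positivity)]
    nlinarith
  linarith

end HitCount

/-! ### Edge boundaries of bounded degree in an expander -/

section CappedBoundary

open Real
open scoped Classical

variable {V : Type*} {G H : SimpleGraph V} {B : Finset V} {d n : ℕ} {ε s η q : ℝ} {F : Set (Sym2 V)}

lemma IsExpander.mul_ncard_le_ncard_extNbhd [Finite V] (hG : IsExpander n G ε s)
    (hη : η ≤ ε / logb 2 n ^ 2) {U : Set V} (hU : (U.ncard : ℝ) ≤ 2 / 3 * n)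
    (hF : (F.ncard : ℝ) ≤ s * U.ncard) :
    η * U.ncard ≤ (extNbhd (G.deleteEdges F) U).ncard := by
  rcases Nat.eq_zero_or_pos U.ncard with h | h
  · simp [h]
  have hF' : ((F ∩ G.edgeSet).ncard : ℝ) ≤ F.ncard :=
    mod_cast Set.ncard_le_ncard Set.inter_subset_left
  calc η * U.ncard ≤ ε / logb 2 n ^ 2 * U.ncard := by gcongr
    _ = ε * U.ncard / logb 2 n ^ 2 := by ring
    _ ≤ _ := by
      rw [SimpleGraph.deleteEdges_eq_inter_edgeSet]
      exact hG U _ Set.inter_subset_right h hU (hF'.trans hF)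

lemma mul_card_le_degree_le_two_mul_card_edgeFinset [Fintype V] (H : SimpleGraph V) (d : ℕ) :
    d * #{v | d ≤ H.degree v} ≤ 2 * #H.edgeFinset := by
  rw [← H.sum_degrees_eq_twice_card_edges, mul_comm, ← smul_eq_mul]
  exact (card_nsmul_le_sum _ _ _ fun v hv => (mem_filter.1 hv).2).trans
    (sum_le_sum_of_subset (subset_univ _))

variable [Fintype V] [DecidableEq V]

/-- `H` consists of edges of `G` leaving `B`, at most `d` of them at any vertex. Capping the degrees
is what makes the number of vertices joined by `H` to a random subset of `B` concentrate. -/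
structure IsCappedBoundary (G : SimpleGraph V) (B : Finset V) (d : ℕ) (H : SimpleGraph V) :
    Prop where
  le : H ≤ G
  isBipartiteWith : H.IsBipartiteWith B ↑Bᶜ
  degree_le : ∀ v, H.degree v ≤ d

lemma IsCappedBoundary.sup_edge (hH : IsCappedBoundary G B d H) {u v : V} (huv : G.Adj u v)
    (hu : u ∈ B) (hv : v ∉ B) (hdu : H.degree u < d) (hdv : H.degree v < d) :
    IsCappedBoundary G B d (H ⊔ SimpleGraph.edge u v) where
  le := sup_le hH.le ((SimpleGraph.edge_le_iff _).2 (Or.inr huv))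
  isBipartiteWith :=
    { disjoint := hH.isBipartiteWith.disjoint
      mem_of_adj := by
        rintro a b (h | h)
        · exact hH.isBipartiteWith.mem_of_adj h
        · obtain ⟨⟨rfl, rfl⟩ | ⟨rfl, rfl⟩, -⟩ := (SimpleGraph.edge_adj ..).1 h <;> simp [hu, hv] }
  degree_le a := by
    have degree_eq (K : SimpleGraph V) (b : V) [Fintype (K.neighborSet b)] :
        K.degree b = (K.neighborSet b).ncard := by
      rw [← K.card_neighborSet_eq_degree, ← Nat.card_coe_set_eq, Nat.card_eq_fintype_card]
    have edge_nbrs : (SimpleGraph.edge u v).neighborSet a =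
        if a = u then {v} else if a = v then {u} else ∅ := by
      ext b
      have := huv.ne
      rw [SimpleGraph.mem_neighborSet, SimpleGraph.edge_adj]
      split_ifs <;> simp <;> grind
    have degree_a := hH.degree_le a
    rw [degree_eq] at hdu hdv degree_a ⊢
    rw [SimpleGraph.neighborSet_sup, edge_nbrs]
    refine (Set.ncard_union_le _ _).trans ?_
    split_ifs with hau hav <;> simp <;> grind

lemma extNbhd_subset_of_maximal_isCappedBoundary (hH : Maximal (IsCappedBoundary G B d) H) :
    extNbhd (G.deleteEdges H.edgeSet) (B \ {v | d ≤ H.degree v}) ⊆ {v | d ≤ H.degree v} := by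
  rintro v ⟨hv, u, ⟨huB, hu⟩, huv⟩
  rw [SimpleGraph.deleteEdges_adj, SimpleGraph.mem_edgeSet] at huv
  by_contra hvd
  have hvB : v ∉ B := fun h => hv ⟨h, hvd⟩
  have added := hH.prop.sup_edge huv.1 huB hvB (not_le.1 hu) (not_le.1 hvd)
  refine huv.2 (hH.le_of_ge added le_sup_left (Or.inr ?_))
  simp [SimpleGraph.edge_adj, huv.1.ne]

/-- Take `H` maximal. If it had few edges, few vertices would be saturated, yet maximality confines
the neighbours of the unsaturated part of `B` outside `H` to the saturated vertices, contradicting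
expansion. -/
theorem IsExpander.exists_isCappedBoundary (hG : IsExpander n G ε s) (hη : η ≤ ε / logb 2 n ^ 2)
    (hη0 : 0 ≤ η) (hη1 : η ≤ 1) (hs : d + 2 ≤ s) (hB : (#B : ℝ) ≤ 2 / 3 * n) (hF : F.ncard ≤ #B) :
    ∃ H, IsCappedBoundary (G.deleteEdges F) B d H ∧ d * (η * #B / 4) ≤ #H.edgeFinset := by
  obtain ⟨H, hH⟩ := (Set.toFinite {H | IsCappedBoundary (G.deleteEdges F) B d H}).exists_maximal
    ⟨⊥, bot_le, ⟨by simp [disjoint_compl_right], by simp⟩, by simp⟩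
  refine ⟨H, hH.prop, ?_⟩
  by_contra! few_edges
  set heavy : Finset V := {v | d ≤ H.degree v}
  have hd : (0 : ℝ) < d := by
    by_contra! h
    have : (0 : ℝ) ≤ #H.edgeFinset := by positivity
    nlinarith [show (0 : ℝ) ≤ η * #B by positivity]
  have card_heavy : (#heavy : ℝ) < η * #B / 2 := by
    have : (d * #heavy : ℝ) ≤ 2 * #H.edgeFinset :=
      mod_cast mul_card_le_degree_le_two_mul_card_edgeFinset H d
    exact lt_of_mul_lt_mul_left (by linarith) hd.le
  have card_light : (#B : ℝ) / 2 ≤ #(B \ heavy) := by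
    have : (#B : ℝ) ≤ #(B \ heavy) + #heavy := mod_cast card_le_card_sdiff_add_card
    nlinarith
  have card_deleted : ((F ∪ H.edgeSet).ncard : ℝ) ≤ s * #(B \ heavy) := by
    have card_le : ((F ∪ H.edgeSet).ncard : ℝ) ≤ F.ncard + #H.edgeFinset := by
      rw [← SimpleGraph.coe_edgeFinset, ← Set.ncard_coe_finset]
      exact_mod_cast Set.ncard_union_le F H.edgeFinset
    have hF' : (F.ncard : ℝ) ≤ #B := mod_cast hF
    have : η * #B ≤ 1 * #B := by gcongr
    nlinarith
  have card_boundary : (extNbhd (G.deleteEdges (F ∪ H.edgeSet)) ↑(B \ heavy)).ncard ≤ #heavy := by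
    rw [← Set.ncard_coe_finset heavy, ← SimpleGraph.deleteEdges_deleteEdges]
    exact Set.ncard_le_ncard (by simpa [heavy] using extNbhd_subset_of_maximal_isCappedBoundary hH)
  have expand : η * #(B \ heavy) ≤ #heavy := by
    have := hG.mul_ncard_le_ncard_extNbhd hη (U := ↑(B \ heavy)) (F := F ∪ H.edgeSet)
    simp only [Set.ncard_coe_finset] at this
    refine (this ?_ card_deleted).trans (mod_cast card_boundary)
    exact (Nat.cast_le.2 (card_le_card sdiff_subset)).trans hB
  nlinarith

lemma IsCappedBoundary.card_add_hitCount_le (hH : IsCappedBoundary G B d H) (S : Finset V) :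
    #B + hitCount Bᶜ (H.neighborFinset ·) S ≤ (B ∪ extNbhd G ↑(B ∩ S) : Set V).ncard := by
  set hits : Finset V := {v ∈ Bᶜ | ¬Disjoint S (H.neighborFinset v)}
  have hits_subset : (hits : Set V) ⊆ extNbhd G ↑(B ∩ S) := fun v hv => by
    simp only [hits, coe_filter, Set.mem_ofPred_eq, mem_compl, not_disjoint_iff,
      SimpleGraph.mem_neighborFinset] at hv
    obtain ⟨hvB, u, huS, huv⟩ := hv
    have huB : u ∈ B := (hH.isBipartiteWith.mem_of_adj huv).resolve_left (by simp [hvB]) |>.2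
    exact ⟨by simp [hvB], u, by simp [huB, huS], hH.le huv.symm⟩
  have disj : Disjoint B hits := disjoint_compl_right.mono_right (filter_subset _ _)
  calc #B + #hits = (B ∪ hits : Set V).ncard := by
        rw [← coe_union, Set.ncard_coe_finset, card_union_of_disjoint disj]
    _ ≤ (B ∪ extNbhd G ↑(B ∩ S) : Set V).ncard :=
        Set.ncard_le_ncard (Set.union_subset_union_right _ hits_subset)

lemma IsCappedBoundary.mul_card_edgeFinset_le_subsetExp_hitCount (hH : IsCappedBoundary G B d H)
    (hq0 : 0 ≤ q) (hq1 : q ≤ 1) (hqd : q * d ≤ 2) :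
    q * #H.edgeFinset / 3 ≤
      subsetExp q univ fun S => (hitCount Bᶜ (H.neighborFinset ·) S : ℝ) := by
  have sum_degrees : ∑ v ∈ Bᶜ, H.degree v = #H.edgeFinset :=
    SimpleGraph.isBipartiteWith_sum_degrees_eq_card_edges' hH.isBipartiteWith
  rw [subsetExp_hitCount, ← sum_degrees, Nat.cast_sum, mul_sum, sum_div]
  refine sum_le_sum fun v _ => ?_
  rw [univ_inter, SimpleGraph.card_neighborFinset_eq_degree]
  refine mul_div_three_le_one_sub_pow hq0 hq1 (le_trans ?_ hqd)
  gcongr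
  exact hH.degree_le v

lemma IsCappedBoundary.card_filter_mem_neighborFinset_le (hH : IsCappedBoundary G B d H) (a : V) :
    #{v ∈ Bᶜ | a ∈ H.neighborFinset v} ≤ if a ∈ B then d else 0 := by
  split_ifs with ha
  · refine (card_le_card fun v hv => ?_).trans (hH.degree_le a)
    simpa [H.adj_comm] using (mem_filter.1 hv).2
  · refine (card_eq_zero.2 (filter_eq_empty_iff.2 fun v hv hav => ?_)).le
    rcases hH.isBipartiteWith.mem_of_adj ((SimpleGraph.mem_neighborFinset ..).1 hav) with h | h
    · exact mem_compl.1 hv h.1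
    · exact ha h.2

theorem IsExpander.subsetProb_ncard_union_extNbhd_lt_le (hG : IsExpander n G ε s)
    (hη : η ≤ ε / logb 2 n ^ 2) (hη0 : 0 ≤ η) (hη1 : η ≤ 1) (hs : d + 2 ≤ s)
    (hB : (#B : ℝ) ≤ 2 / 3 * n) (hF : F.ncard ≤ #B)
    (hq0 : 0 ≤ q) (hq1 : q ≤ 1) (hqd1 : 1 ≤ q * d) (hqd2 : q * d ≤ 2) :
    subsetProb q univ {S | ((B ∪ extNbhd (G.deleteEdges F) ↑(B ∩ S) : Set V).ncard : ℝ) <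
      (1 + η / 24) * #B} ≤ exp (-(η ^ 2 * #B / (288 * d ^ 2))) := by
  obtain ⟨H, hH, many_edges⟩ := hG.exists_isCappedBoundary hη hη0 hη1 hs hB hF
  set hits := fun S => (hitCount Bᶜ (H.neighborFinset ·) S : ℝ)
  have mean : η * #B / 12 ≤ subsetExp q univ hits := by
    refine le_trans ?_ (hH.mul_card_edgeFinset_le_subsetExp_hitCount hq0 hq1 hqd2)
    nlinarith [show (0 : ℝ) ≤ η * #B by positivity]
  have sum_sq : ∑ a, ((if a ∈ B then d else 0 : ℕ) : ℝ) ^ 2 ≤ d ^ 2 * #B := by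
    simp [mul_comm]
  calc _ ≤ subsetProb q univ {S | hits S ≤ subsetExp q univ hits - η * #B / 24} :=
        subsetProb_mono hq0 hq1 fun S hS => ?_
    _ ≤ exp (-(2 * (η * #B / 24) ^ 2 / (d ^ 2 * #B))) :=
        subsetProb_le_sub_le_exp hq0 hq1 (by positivity) (fun a S =>
          (abs_hitCount_insert_sub_le _ _ a S).trans
            (mod_cast hH.card_filter_mem_neighborFinset_le a)) sum_sq
    _ = _ := ?_
  · have := (Nat.cast_le (α := ℝ)).2 (hH.card_add_hitCount_le S)
    rw [Nat.cast_add] at this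
    rw [Set.mem_ofPred_eq] at hS ⊢
    linarith
  · have : (d : ℝ) ≠ 0 := by rintro h; norm_num [h] at hqd1
    rcases eq_or_ne (#B : ℝ) 0 with h | _
    · simp [h]
    · field_simp; ring_nf

end CappedBoundary

/-! ### Exposing the random set in rounds -/

section Sprinkling

variable {V : Type*} {G : SimpleGraph V} {U A S : Set V} {k : ℕ}

/-- The vertices joined to `U` by a walk of length at most `k` whose internal vertices lie in `A`.
Unlike for `ball`, the endpoint itself is not required to lie in `A`, so that `A` can be revealed
before it is decided which of these vertices are retained. -/
def reach (G : SimpleGraph V) (U A : Set V) (k : ℕ) : Set V :=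
  {v | ∃ u ∈ U, ∃ w : G.Walk u v, w.length ≤ k ∧ ∀ z ∈ w.support, z ≠ u → z ≠ v → z ∈ A}

lemma union_extNbhd_subset_reach (G : SimpleGraph V) (U A : Set V) :
    U ∪ extNbhd G U ⊆ reach G U A 1 := by
  rintro v (hv | ⟨-, u, hu, huv⟩)
  · exact ⟨v, hv, .nil, by simp, by simp⟩
  · exact ⟨u, hu, huv.toWalk, by simp, by simp +contextual⟩

lemma reach_union_extNbhd_subset (G : SimpleGraph V) (U A S : Set V) (k : ℕ) :
    reach G U A k ∪ extNbhd G (reach G U A k ∩ S) ⊆ reach G U (A ∪ S) (k + 1) := by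
  rintro v (⟨u, hu, w, hk, hw⟩ | ⟨-, x, ⟨⟨u, hu, w, hk, hw⟩, hxS⟩, hxv⟩)
  · exact ⟨u, hu, w, by lia, fun z hz hzu hzv => Or.inl (hw z hz hzu hzv)⟩
  · refine ⟨u, hu, w.concat hxv, by simpa using hk, fun z hz hzu hzv => ?_⟩
    have hzw : z ∈ w.support := by simpa [SimpleGraph.Walk.support_concat, hzv] using hz
    rcases eq_or_ne z x with rfl | hzx
    · exact Or.inr hxS
    · exact Or.inl (hw z hzw hzu hzx)

lemma inter_reach_subset_ball (hAS : A ⊆ S) {ℓ : ℝ} (hk : k ≤ ℓ) :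
    S ∩ reach G U A k ⊆ ball G ℓ U S := by
  classical
  rintro v ⟨hvS, u, hu, w, hwk, hw⟩
  refine ⟨hvS, u, hu, w.bypass, w.bypass_isPath, ?_, fun z hz hzu hzv =>
    hAS (hw z (w.support_bypass_subset_support hz) hzu hzv)⟩
  exact (Nat.cast_le.2 (w.length_bypass_le_length.trans hwk)).trans hk

variable [Fintype V] [DecidableEq V] {q r δ γ M N : ℝ}

lemma subsetProb_ncard_reach_union_lt_le (hq0 : 0 ≤ q) (hq1 : q ≤ 1) (hδ : 0 ≤ δ) (hγ : 0 ≤ γ)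
    (hgrow : ∀ B : Finset V, M ≤ #B → #B ≤ N → subsetProb q univ
      {S | ((B ∪ extNbhd G ↑(B ∩ S) : Set V).ncard : ℝ) < (1 + γ) * #B} ≤ δ)
    {x : ℝ} (hMx : M ≤ x) {A : Finset V} (hA : min N x ≤ (reach G U A k).ncard) :
    subsetProb q univ
      {S | ((reach G U ↑(A ∪ S) (k + 1)).ncard : ℝ) < min N ((1 + γ) * x)} ≤ δ := by
  classical
  set R := reach G U A k
  have reach_grows (S : Finset V) :
      ((R ∪ extNbhd G (R ∩ S)).ncard : ℝ) ≤ (reach G U ↑(A ∪ S) (k + 1)).ncard := by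
    rw [coe_union]
    exact_mod_cast Set.ncard_le_ncard (reach_union_extNbhd_subset G U A S k)
  rcases le_or_gt N R.ncard with hN | hN
  · have never (S : Finset V) :
        ¬((reach G U ↑(A ∪ S) (k + 1)).ncard : ℝ) < min N ((1 + γ) * x) := by
      refine fun h => (lt_min_iff.1 h).1.not_ge (le_trans ?_ (reach_grows S))
      exact hN.trans (mod_cast Set.ncard_le_ncard Set.subset_union_left)
    simpa only [never, Set.ofPred_false, subsetProb, Set.indicator_empty', map_zero] using hδ
  · have hx : x ≤ R.ncard := (min_le_iff.1 hA).resolve_left hN.not_ge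
    have card_R : #R.toFinset = R.ncard := (Set.ncard_eq_toFinset_card' R).symm
    refine (subsetProb_mono hq0 hq1 fun S hS => ?_).trans
      (hgrow R.toFinset (card_R ▸ hMx.trans hx) (card_R ▸ hN.le))
    rw [Set.mem_ofPred_eq] at hS ⊢
    rw [coe_inter, Set.coe_toFinset, card_R]
    calc _ ≤ _ := reach_grows S
      _ < (1 + γ) * x := (lt_min_iff.1 hS).2
      _ ≤ (1 + γ) * R.ncard := by gcongr

theorem subsetProb_ncard_reach_lt_le_of_growth (hq0 : 0 ≤ q) (hq1 : q ≤ 1) (hδ : 0 ≤ δ) (hγ : 0 ≤ γ)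
    (hM : 0 ≤ M) (hstart : M ≤ (reach G U ∅ k).ncard)
    (hgrow : ∀ B : Finset V, M ≤ #B → #B ≤ N → subsetProb q univ
      {S | ((B ∪ extNbhd G ↑(B ∩ S) : Set V).ncard : ℝ) < (1 + γ) * #B} ≤ δ) (m : ℕ) :
    subsetProb (1 - (1 - q) ^ m) univ
      {A : Finset V | ((reach G U A (k + m)).ncard : ℝ) < min N ((1 + γ) ^ m * M)} ≤ m * δ := by
  induction m with
  | zero => simp [subsetProb, subsetExp_zero, hstart]
  | succ m ih =>
    have hpow0 : 0 ≤ (1 - q) ^ m := pow_nonneg (sub_nonneg.2 hq1) m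
    have hpow1 : (1 - q) ^ m ≤ 1 := pow_le_one₀ (sub_nonneg.2 hq1) (by linarith)
    have density : 1 - (1 - q) ^ (m + 1) = 1 - (1 - (1 - (1 - q) ^ m)) * (1 - q) := by ring
    have hMx : M ≤ (1 + γ) ^ m * M :=
      le_mul_of_one_le_left hM (one_le_pow₀ (by linarith))
    rw [density, pow_succ', mul_assoc, Nat.cast_add_one, add_one_mul, ← add_assoc k]
    refine (subsetProb_union_round_le (by linarith) (by linarith) hq0 hq1 hδ
      fun A hA => ?_).trans (add_le_add_left ih δ)
    exact subsetProb_ncard_reach_union_lt_le hq0 hq1 hδ hγ hgrow hMx (not_lt.1 hA)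

theorem subsetProb_ncard_ball_le_le_of_last_round (hq0 : 0 ≤ q) (hq1 : q ≤ 1) (hr0 : 0 ≤ r)
    (hr1 : r ≤ 1) (hδ : 0 ≤ δ) {m : ℕ} {c ℓ : ℝ} (hℓ : k + m ≤ ℓ)
    (hreach : subsetProb (1 - (1 - q) ^ m) univ
      {A : Finset V | ((reach G U A (k + m)).ncard : ℝ) < N} ≤ m * δ)
    (hlast : ∀ B : Finset V, N ≤ #B → subsetProb r univ {S | (#(S ∩ B) : ℝ) ≤ c} ≤ δ) :
    subsetProb (1 - (1 - q) ^ m * (1 - r)) univ {S : Finset V | ((ball G ℓ U S).ncard : ℝ) ≤ c} ≤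
      (m + 1) * δ := by
  classical
  have hpow0 : 0 ≤ (1 - q) ^ m := pow_nonneg (sub_nonneg.2 hq1) m
  have hpow1 : (1 - q) ^ m ≤ 1 := pow_le_one₀ (sub_nonneg.2 hq1) (by linarith)
  rw [← sub_sub_cancel 1 ((1 - q) ^ m), add_one_mul]
  refine (subsetProb_union_round_le (by linarith) (by linarith) hr0 hr1 hδ
    fun A hA => ?_).trans (add_le_add_left hreach δ)
  rw [Set.mem_ofPred_eq, not_lt, Set.ncard_eq_toFinset_card'] at hA
  refine (subsetProb_mono hr0 hr1 fun S hS => ?_).trans (hlast _ hA)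
  have retained : #(S ∩ (reach G U A (k + m)).toFinset) ≤ (ball G ℓ U ↑(A ∪ S)).ncard := by
    rw [← Set.ncard_coe_finset]
    refine Set.ncard_le_ncard (subset_trans ?_ (inter_reach_subset_ball
      (coe_subset.2 subset_union_left) (k := k + m) (by exact_mod_cast hℓ)))
    rw [coe_inter, Set.coe_toFinset]
    exact Set.inter_subset_inter_left _ (coe_subset.2 subset_union_right)
  simp only [Set.mem_ofPred_eq] at hS ⊢
  exact (Nat.cast_le.2 retained).trans hS

end Sprinkling

/-! ### Choice of parameters -/

section Parameters

open Real

lemma le_one_add_pow_of_logb_le {γ y : ℝ} {m : ℕ} (hγ0 : 0 ≤ γ) (hγ1 : γ ≤ 1) (hy : 0 < y)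
    (h : logb 2 y ≤ m * γ) : y ≤ (1 + γ) ^ m :=
  calc y = 2 ^ logb 2 y := (rpow_logb two_pos (by norm_num) hy).symm
    _ ≤ 2 ^ (m * γ) := by gcongr; norm_num
    _ = ((1 + 1) ^ γ) ^ m := by rw [mul_comm, rpow_mul two_pos.le, rpow_natCast]; norm_num
    _ ≤ (1 + γ) ^ m := by
      gcongr
      simpa using rpow_one_add_le_one_add_mul_self (s := 1) (by norm_num) hγ0 hγ1

lemma exists_last_round_density {p q : ℝ} {m : ℕ} (hp0 : 0 ≤ p) (hp1 : p ≤ 1) (hq1 : q ≤ 1)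
    (hmq : m * q ≤ p / 100) :
    ∃ r, 99 / 100 * p ≤ r ∧ r ≤ 1 ∧ 1 - (1 - q) ^ m * (1 - r) = p := by
  have bernoulli : 1 - p / 100 ≤ (1 - q) ^ m := by
    have := one_add_mul_le_pow (a := -q) (by linarith) m
    rw [← sub_eq_add_neg] at this
    linarith
  have hpos : 0 < (1 - q) ^ m := by linarith
  refine ⟨1 - (1 - p) / (1 - q) ^ m, ?_, ?_, ?_⟩
  · rw [le_sub_comm, div_le_iff₀ hpos]
    nlinarith
  · have := div_nonneg (sub_nonneg.2 hp1) hpos.le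
    linarith
  · field_simp; ring

variable {V : Type*} {G : SimpleGraph V} {U : Set V} {F : Set (Sym2 V)}

/-- A vertex lost from `N(U)` when deleting `F` is the endpoint of an edge of `F`, and a different
edge for each such vertex since the other endpoint lies in `U`. -/
lemma ncard_extNbhd_le_ncard_union_extNbhd_deleteEdges [Finite V] (hF : F.ncard ≤ U.ncard) :
    (extNbhd G U).ncard ≤ (U ∪ extNbhd (G.deleteEdges F) U).ncard := by
  set N' := extNbhd (G.deleteEdges F) U
  have lost (v : V) (hv : v ∈ extNbhd G U \ N') : ∃ u ∈ U, s(u, v) ∈ F := by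
    obtain ⟨⟨hvU, u, hu, huv⟩, hvN⟩ := hv
    by_contra! h
    exact hvN ⟨hvU, u, hu, SimpleGraph.deleteEdges_adj.2 ⟨huv, h u hu⟩⟩
  choose! g hgU hgF using lost
  have lost_le : (extNbhd G U \ N').ncard ≤ F.ncard := by
    refine Set.ncard_le_ncard_of_injOn (fun v => s(g v, v)) hgF fun v hv w hw h => ?_
    rcases Sym2.eq_iff.1 h with ⟨-, h⟩ | ⟨h, -⟩
    · exact h
    · exact absurd (h ▸ hgU v hv) hw.1.1
  have union_eq : (U ∪ N').ncard = U.ncard + N'.ncard :=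
    Set.ncard_union_eq (Set.disjoint_right.2 fun v hv => hv.1)
  have := Set.ncard_le_ncard_sdiff_add_ncard (extNbhd G U) N'
  lia

variable [Fintype V] {n : ℕ} {ε s p q r η x L : ℝ}

lemma one_le_mul_ceil_inv_le_two (hq0 : 0 < q) (hq1 : q ≤ 1) :
    1 ≤ q * ⌈q⁻¹⌉₊ ∧ q * ⌈q⁻¹⌉₊ ≤ 2 := by
  have lower := mul_le_mul_of_nonneg_left (Nat.le_ceil q⁻¹) hq0.le
  have upper := mul_le_mul_of_nonneg_left (Nat.ceil_lt_add_one (inv_pos.2 hq0).le).le hq0.le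
  rw [mul_inv_cancel₀ hq0.ne'] at lower
  rw [mul_add_one, mul_inv_cancel₀ hq0.ne'] at upper
  exact ⟨lower, by linarith⟩

theorem IsExpander.subsetProb_growth_round_le [DecidableEq V] {B : Finset V}
    (hG : IsExpander n G ε s) (hLn : logb 2 n = L) (hη0 : 0 ≤ η) (hη1 : η ≤ 1) (hη : η ≤ ε / L ^ 2)
    (hL : 2 ^ 24 ≤ L) (hηL : 2 ^ 24 ≤ η ^ 2 * L ^ 5) (hp0 : 0 < p) (hp1 : p ≤ 1)
    (hs : L ^ 5 / p ≤ s) (hx : F.ncard ≤ x) (hxB : x * L ^ 19 / p ^ 2 ≤ #B)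
    (hB : #B ≤ 2 / 3 * (n : ℝ)) :
    subsetProb (p / (100 * L ^ 4)) univ
      {S | ((B ∪ extNbhd (G.deleteEdges F) ↑(B ∩ S) : Set V).ncard : ℝ) < (1 + η / 24) * #B} ≤
        exp (-(x * L ^ 6)) := by
  subst hLn
  set L := logb 2 n
  set q := p / (100 * L ^ 4) with hq
  set d := ⌈q⁻¹⌉₊
  have hL1 : 1 ≤ L := by linarith
  have hL4 : 1 ≤ L ^ 4 := one_le_pow₀ hL1
  have hx0 : 0 ≤ x := (Nat.cast_nonneg _).trans hx
  have hq0 : 0 < q := by positivity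
  have hq1 : q ≤ 1 := div_le_one_of_le₀ (by linarith) (by positivity)
  obtain ⟨hqd1, hqd2⟩ := one_le_mul_ceil_inv_le_two hq0 hq1
  have hpd : p * d ≤ 200 * L ^ 4 := by
    rw [hq, div_mul_eq_mul_div, div_le_iff₀ (by positivity)] at hqd2
    linarith
  have hds : d + 2 ≤ s := by
    refine le_trans ?_ hs
    rw [le_div_iff₀ hp0]
    calc (d + 2) * p ≤ 202 * L ^ 4 := by linarith
      _ ≤ L * L ^ 4 := by gcongr; linarith
      _ = L ^ 5 := by ring
  have hFB : (F.ncard : ℝ) ≤ #B := by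
    refine hx.trans (le_trans ?_ hxB)
    rw [le_div_iff₀ (by positivity)]
    gcongr
    exact (pow_le_one₀ hp0.le hp1).trans (one_le_pow₀ hL1)
  refine (hG.subsetProb_ncard_union_extNbhd_lt_le hη hη0 hη1 hds hB (mod_cast hFB) hq0.le hq1
    hqd1 hqd2).trans (exp_le_exp.2 (neg_le_neg ?_))
  rw [div_le_iff₀ (by positivity)] at hxB
  have : (0 : ℝ) < d := pos_of_mul_pos_right (by linarith) hq0.le
  rw [le_div_iff₀ (by positivity), ← mul_le_mul_iff_left₀ (show 0 < p ^ 2 by positivity)]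
  calc x * L ^ 6 * (288 * d ^ 2) * p ^ 2 = x * L ^ 6 * 288 * (p * d) ^ 2 := by ring
    _ ≤ x * L ^ 6 * 288 * (200 * L ^ 4) ^ 2 := by gcongr
    _ = x * L ^ 14 * 11520000 := by ring
    _ ≤ x * L ^ 14 * (η ^ 2 * L ^ 5) := by gcongr; linarith
    _ = η ^ 2 * (x * L ^ 19) := by ring
    _ ≤ η ^ 2 * (#B * p ^ 2) := by gcongr
    _ = η ^ 2 * #B * p ^ 2 := by ring

lemma subsetProb_card_inter_le_eleven_twentieths_le [DecidableEq V] {B : Finset V} (hp0 : 0 ≤ p)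
    (hpr : 99 / 100 * p ≤ r) (hr1 : r ≤ 1) (hB : 2 / 3 * (Fintype.card V : ℝ) ≤ #B) :
    subsetProb r univ {S | (#(S ∩ B) : ℝ) ≤ 11 / 20 * (p * Fintype.card V)} ≤
      exp (-(p ^ 2 * Fintype.card V / 50)) := by
  set N := (Fintype.card V : ℝ)
  have hBN : (#B : ℝ) ≤ N := Nat.cast_le.2 (card_le_univ B)
  have margin : 11 / 100 * (p * N) ≤ r * #B - 11 / 20 * (p * N) := by
    have : 99 / 100 * p * (2 / 3 * N) ≤ r * #B := by gcongr; linarith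
    linarith
  have margin_nonneg : 0 ≤ 11 / 100 * (p * N) := by positivity
  have tail := subsetProb_card_inter_le_le_exp (by linarith) hr1 (margin_nonneg.trans margin)
    (subset_univ B)
  rw [sub_sub_cancel] at tail
  refine tail.trans (exp_le_exp.2 (neg_le_neg ?_))
  rcases (Nat.cast_nonneg (α := ℝ) #B).eq_or_lt with hB0 | hB0
  · have hN : N = 0 := le_antisymm (by linarith) (Nat.cast_nonneg _)
    simp [hN, ← hB0]
  · rw [le_div_iff₀ hB0]
    calc p ^ 2 * N / 50 * #B ≤ p ^ 2 * N / 50 * N := by gcongr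
      _ ≤ 2 * (11 / 100 * (p * N)) ^ 2 := by nlinarith [sq_nonneg (p * N)]
      _ ≤ _ := by gcongr

lemma subsetProb_eleven_tenths_le_card_le (hp0 : 0 ≤ p) (hp1 : p ≤ 1) :
    subsetProb p univ {S : Finset V | 11 / 10 * (p * Fintype.card V) ≤ #S} ≤
      exp (-(p ^ 2 * Fintype.card V / 50)) := by
  classical
  have tail := subsetProb_le_card_inter_le_exp (t := p * Fintype.card V / 10) hp0 hp1
    (by positivity) (subset_univ (univ : Finset V))
  simp only [inter_univ, card_univ] at tail
  convert tail using 1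
  · ring_nf
  · rcases eq_or_ne (Fintype.card V : ℝ) 0 with h | _
    · simp [h]
    · field_simp; ring_nf

lemma exists_round_count (hη0 : 0 ≤ η) (hL : 2 ^ 24 ≤ L) (hηL : 2 ^ 24 ≤ η ^ 2 * L ^ 5) :
    ∃ m : ℕ, m + 1 ≤ L ^ 4 ∧ L ≤ m * (η / 24) := by
  have hL4 : 4 ≤ L ^ 4 := (show (4 : ℝ) ≤ (2 ^ 24) ^ 4 by norm_num).trans (by gcongr)
  have hηL3 : 48 ≤ η * L ^ 3 := by
    refine le_of_sq_le_sq ?_ (by positivity)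
    calc (48 : ℝ) ^ 2 ≤ 2 ^ 24 * 2 ^ 24 := by norm_num
      _ ≤ η ^ 2 * L ^ 5 * L := by gcongr
      _ = (η * L ^ 3) ^ 2 := by ring
  have one_le_floor : 1 ≤ ⌊L ^ 4⌋₊ := Nat.one_le_floor_iff _ |>.2 (by linarith)
  refine ⟨⌊L ^ 4⌋₊ - 1, ?_, ?_⟩ <;> rw [Nat.cast_sub one_le_floor, Nat.cast_one]
  · rw [sub_add_cancel]
    exact Nat.floor_le (by positivity)
  · calc L ≤ η * L ^ 3 * L / 48 := by nlinarith
      _ = L ^ 4 / 2 * (η / 24) := by ring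
      _ ≤ (⌊L ^ 4⌋₊ - 1) * (η / 24) := by
        gcongr
        linarith [Nat.lt_floor_add_one (L ^ 4)]

theorem IsExpander.subsetProb_ncard_reach_lt_le (hG : IsExpander n G ε s) (hLn : logb 2 n = L)
    (hη0 : 0 ≤ η) (hη1 : η ≤ 1) (hη : η ≤ ε / L ^ 2) (hL : 2 ^ 24 ≤ L)
    (hηL : 2 ^ 24 ≤ η ^ 2 * L ^ 5) (hp0 : 0 < p) (hp1 : p ≤ 1) (hs : L ^ 5 / p ≤ s)
    (hx1 : 1 ≤ x) (hx : F.ncard ≤ x) {k m : ℕ} (hm : L ≤ m * (η / 24))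
    (hU : x * L ^ 19 / p ^ 2 ≤ (reach (G.deleteEdges F) U ∅ k).ncard) :
    subsetProb (1 - (1 - p / (100 * L ^ 4)) ^ m) univ
      {A : Finset V | ((reach (G.deleteEdges F) U A (k + m)).ncard : ℝ) < 2 / 3 * n} ≤
        m * exp (-(x * L ^ 6)) := by
  classical
  have hL4 : 1 ≤ L ^ 4 := one_le_pow₀ (by linarith)
  have hL19 : 1 ≤ L ^ 19 := one_le_pow₀ (by linarith)
  have start_ge_one : 1 ≤ x * L ^ 19 / p ^ 2 := by
    rw [one_le_div (by positivity)]
    exact (pow_le_one₀ hp0.le hp1).trans (one_le_mul_of_one_le_of_one_le hx1 hL19)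
  have hn : (n : ℝ) ≤ (1 + η / 24) ^ m := by
    rcases (Nat.cast_nonneg (α := ℝ) n).eq_or_lt with h | h
    · rw [← h]; positivity
    · exact le_one_add_pow_of_logb_le (by linarith) (by linarith) h (hLn ▸ hm)
  have target : 2 / 3 * (n : ℝ) ≤ (1 + η / 24) ^ m * (x * L ^ 19 / p ^ 2) := by
    have := le_mul_of_one_le_right (show 0 ≤ (1 + η / 24) ^ m by positivity) start_ge_one
    linarith [Nat.cast_nonneg (α := ℝ) n]
  rw [← min_eq_left target]
  refine subsetProb_ncard_reach_lt_le_of_growth (by positivity) ?_ (exp_pos _).le (by positivity)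
    (by positivity) hU (fun B hMB hBN => ?_) m
  · exact div_le_one_of_le₀ (by linarith) (by positivity)
  · exact hG.subsetProb_growth_round_le hLn hη0 hη1 hη hL hηL hp0 hp1 hs hx hMB hBN

lemma exp_neg_sq_mul_div_le_exp_neg (hL : 2 ^ 24 ≤ L) (hp0 : 0 < p) (hx : 0 ≤ x) {N : ℝ}
    (hN : x * L ^ 19 / p ^ 2 ≤ N) : exp (-(p ^ 2 * N / 50)) ≤ exp (-(x * L ^ 6)) := by
  rw [div_le_iff₀' (by positivity)] at hN
  have hL13 : 50 ≤ L ^ 13 := (show (50 : ℝ) ≤ (2 ^ 24) ^ 13 by norm_num).trans (by gcongr)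
  gcongr
  rw [le_div_iff₀ (by norm_num)]
  calc x * L ^ 6 * 50 ≤ x * L ^ 6 * L ^ 13 := by gcongr
    _ = x * L ^ 19 := by ring
    _ ≤ p ^ 2 * N := hN

lemma pow_four_add_one_mul_exp_neg_le (hL : 2 ≤ L) (hx : 1 ≤ x) :
    (L ^ 4 + 1) * exp (-(x * L ^ 6)) ≤ exp (-(x * L ^ 2)) :=
  calc (L ^ 4 + 1) * exp (-(x * L ^ 6)) ≤ exp (x * L ^ 4) * exp (-(x * L ^ 6)) := by
        gcongr
        exact (add_one_le_exp _).trans (exp_le_exp.2 (le_mul_of_one_le_left (by positivity) hx))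
    _ = exp (x * L ^ 4 - x * L ^ 6) := by rw [← exp_add, sub_eq_add_neg]
    _ ≤ exp (-(x * L ^ 2)) := by
        have : L ^ 4 + L ^ 2 ≤ L ^ 6 :=
          calc L ^ 4 + L ^ 2 ≤ L ^ 4 + L ^ 4 := by gcongr <;> linarith
            _ = L ^ 4 * 2 := by ring
            _ ≤ L ^ 4 * L ^ 2 := by gcongr; nlinarith
            _ = L ^ 6 := by ring
        gcongr
        nlinarith

theorem IsExpander.subsetProb_ncard_ball_le_le (hG : IsExpander (Fintype.card V) G ε s)
    (hLn : logb 2 (Fintype.card V) = L) (hη0 : 0 ≤ η) (hη1 : η ≤ 1) (hη : η ≤ ε / L ^ 2)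
    (hL : 2 ^ 24 ≤ L) (hηL : 2 ^ 24 ≤ η ^ 2 * L ^ 5) (hp0 : 0 < p) (hp1 : p ≤ 1)
    (hs : L ^ 5 / p ≤ s) (hx1 : 1 ≤ x) (hx : F.ncard ≤ x)
    (hU : x * L ^ 19 / p ^ 2 ≤ (reach (G.deleteEdges F) U ∅ 1).ncard) :
    subsetProb p univ {S : Finset V | ((ball (G.deleteEdges F) (L ^ 4) U S).ncard : ℝ) ≤
      11 / 20 * (p * Fintype.card V)} ≤ L ^ 4 * exp (-(x * L ^ 6)) := by
  classical
  obtain ⟨m, hmL, hm⟩ := exists_round_count hη0 hL hηL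
  have : 1 ≤ L ^ 4 := one_le_pow₀ (by linarith)
  have hq1 : p / (100 * L ^ 4) ≤ 1 := div_le_one_of_le₀ (by linarith) (by positivity)
  have hmq : m * (p / (100 * L ^ 4)) ≤ p / 100 := by
    rw [mul_div_assoc', div_le_div_iff₀ (by positivity) (by norm_num)]
    nlinarith
  obtain ⟨r, hpr, hr1, density⟩ := exists_last_round_density hp0.le hp1 hq1 hmq
  have card_reach : (reach (G.deleteEdges F) U ∅ 1).ncard ≤ Fintype.card V :=
    Nat.card_eq_fintype_card (α := V) ▸ Set.ncard_le_card _
  have last_round (B : Finset V) (hB : 2 / 3 * (Fintype.card V : ℝ) ≤ #B) :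
      subsetProb r univ {S | (#(S ∩ B) : ℝ) ≤ 11 / 20 * (p * Fintype.card V)} ≤
        exp (-(x * L ^ 6)) :=
    (subsetProb_card_inter_le_eleven_twentieths_le hp0.le hpr hr1 hB).trans
      (exp_neg_sq_mul_div_le_exp_neg hL hp0 (by linarith) (hU.trans (Nat.cast_le.2 card_reach)))
  have reached := hG.subsetProb_ncard_reach_lt_le hLn hη0 hη1 hη hL hηL hp0 hp1 hs hx1 hx hm hU
  have all_rounds := subsetProb_ncard_ball_le_le_of_last_round (ℓ := L ^ 4) (by positivity) hq1
    (by linarith) hr1 (exp_pos _).le (by rwa [Nat.cast_one, add_comm]) reached last_round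
  rw [density] at all_rounds
  exact all_rounds.trans (by gcongr)

theorem IsExpander.subsetProb_ncard_ball_le_half_card_le (hG : IsExpander (Fintype.card V) G ε s)
    (hLn : logb 2 (Fintype.card V) = L) (hη0 : 0 ≤ η) (hη1 : η ≤ 1) (hη : η ≤ ε / L ^ 2)
    (hL : 2 ^ 24 ≤ L) (hηL : 2 ^ 24 ≤ η ^ 2 * L ^ 5) (hp0 : 0 < p) (hp1 : p ≤ 1)
    (hs : L ^ 5 / p ≤ s) (hU : U.ncard * L ^ 19 / p ^ 2 ≤ (extNbhd G U).ncard)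
    (hF : F.ncard ≤ U.ncard) :
    subsetProb p univ {S : Finset V |
      ((ball (G.deleteEdges F) (L ^ 4) U S).ncard : ℝ) ≤ #S / 2} ≤ exp (-(U.ncard * L ^ 2)) := by
  classical
  rcases U.ncard.eq_zero_or_pos with hU0 | hU0
  · simpa [hU0] using subsetProb_le_one hp0.le hp1 _ _
  have hx1 : (1 : ℝ) ≤ U.ncard := mod_cast hU0
  have start : (extNbhd G U).ncard ≤ (reach (G.deleteEdges F) U ∅ 1).ncard :=
    (ncard_extNbhd_le_ncard_union_extNbhd_deleteEdges hF).trans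
      (Set.ncard_le_ncard (union_extNbhd_subset_reach _ U ∅))
  have card_ext : (extNbhd G U).ncard ≤ Fintype.card V :=
    Nat.card_eq_fintype_card (α := V) ▸ Set.ncard_le_card _
  calc _ ≤ subsetProb p univ ({S : Finset V | ((ball (G.deleteEdges F) (L ^ 4) U S).ncard : ℝ) ≤
          11 / 20 * (p * Fintype.card V)} ∪ {S | 11 / 10 * (p * Fintype.card V) ≤ #S}) :=
        subsetProb_mono hp0.le hp1 fun S hS => ?_
    _ ≤ L ^ 4 * exp (-(U.ncard * L ^ 6)) + exp (-(U.ncard * L ^ 6)) :=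
        (subsetProb_union_le hp0.le hp1 ..).trans <| add_le_add
          (hG.subsetProb_ncard_ball_le_le hLn hη0 hη1 hη hL hηL hp0 hp1 hs hx1 (mod_cast hF)
            (hU.trans (mod_cast start)))
          ((subsetProb_eleven_tenths_le_card_le hp0.le hp1).trans <|
            exp_neg_sq_mul_div_le_exp_neg hL hp0 (by linarith) (hU.trans (Nat.cast_le.2 card_ext)))
    _ ≤ _ := by
        rw [← add_one_mul]
        exact pow_four_add_one_mul_exp_neg_le (by linarith) hx1
  · by_contra! h
    simp only [Set.mem_union, Set.mem_ofPred_eq, not_or, not_le] at hS h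
    linarith

end Parameters

lemma bernoulliProb_eq_one_sub_subsetProb (n : ℕ) (p : ℝ) (E : Set (Finset (Fin n))) :
    bernoulliProb n p E = 1 - subsetProb p univ Eᶜ := by
  rw [bernoulliProb_eq_subsetProb, subsetProb_compl, sub_sub_cancel]

lemma pow_div_pow_le_zpow_neg_mul_pow {p L : ℝ} (hp0 : 0 < p) (hp1 : p ≤ 1) (hL : 1 ≤ L)
    {a b i j : ℕ} (hab : a ≤ b) (hij : i ≤ j) : L ^ a / p ^ i ≤ p ^ (-(j : ℤ)) * L ^ b := by
  have hp : 1 ≤ p⁻¹ := (one_le_inv₀ hp0).2 hp1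
  calc L ^ a / p ^ i = p⁻¹ ^ i * L ^ a := by ring
    _ ≤ p⁻¹ ^ j * L ^ b := by gcongr
    _ = p ^ (-(j : ℤ)) * L ^ b := by rw [zpow_neg, zpow_natCast, inv_pow]

theorem statement19_general {ε₀ : ℝ} (hε₀ : 0 < ε₀) :
    ∃ N : ℕ, ∀ n : ℕ, N ≤ n →
      ∀ (p ε s : ℝ) (G : SimpleGraph (Fin n)) (U : Set (Fin n)) (F : Set (Sym2 (Fin n))),
        0 < p → p ≤ 1 →
        IsExpander n G ε s →
        ε₀ ≤ ε →
        Real.logb 2 n ^ 5 / p ≤ s →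
        U.ncard * Real.logb 2 n ^ 19 / p ^ 2 ≤ (extNbhd G U).ncard →
        F.ncard ≤ U.ncard →
        1 - Real.exp (-(U.ncard * Real.logb 2 n ^ 2)) ≤
          bernoulliProb n p
            {S : Finset (Fin n) | (S.card : ℝ) / 2 <
              ((ball (G.deleteEdges F) (Real.logb 2 n ^ 4) U (↑S)).ncard : ℝ)} := by
  have large : ∀ᶠ n : ℕ in .atTop, max (2 ^ 24 / ε₀ ^ 2) (max (2 ^ 24) ε₀) ≤ Real.logb 2 n :=
    ((Real.tendsto_logb_atTop one_lt_two).comp tendsto_natCast_atTop_atTop).eventually_ge_atTop _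
  obtain ⟨N, hN⟩ := Filter.eventually_atTop.1 large
  refine ⟨N, fun n hn p ε s G U F hp0 hp1 hG hε hs hU hF => ?_⟩
  obtain ⟨hL₁, hL, hL₂⟩ : 2 ^ 24 / ε₀ ^ 2 ≤ Real.logb 2 n ∧ 2 ^ 24 ≤ Real.logb 2 n ∧
    ε₀ ≤ Real.logb 2 n := by simpa only [max_le_iff] using hN n hn
  set L := Real.logb 2 n with hLn
  rw [← Fintype.card_fin n] at hLn
  replace hG : IsExpander (Fintype.card (Fin n)) G ε s := by rwa [Fintype.card_fin]
  have hη1 : ε₀ / L ^ 2 ≤ 1 := div_le_one_of_le₀ (by nlinarith) (by positivity)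
  have hηL : 2 ^ 24 ≤ (ε₀ / L ^ 2) ^ 2 * L ^ 5 := by
    rw [div_le_iff₀' (by positivity)] at hL₁
    exact hL₁.trans_eq (by field_simp)
  have bound := hG.subsetProb_ncard_ball_le_half_card_le hLn.symm (by positivity) hη1
    (by gcongr) hL hηL hp0 hp1 hs hU hF
  rw [bernoulliProb_eq_one_sub_subsetProb]
  simpa only [Set.compl_ofPred, not_lt] using sub_le_sub_left bound 1

/-- Well-expanding sets reach more than half of a `p`-random vertex set by short paths,
with probability at least `1 - e^{-c|U|(log n)²}`. -/
theorem statement19 :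
    ∃ c : ℝ, 0 < c ∧ ∃ N : ℕ, ∀ n : ℕ, N ≤ n →
      ∀ (p ε s : ℝ) (G : SimpleGraph (Fin n)) (U : Set (Fin n))
        (F : Set (Sym2 (Fin n))),
        0 < p → p < 1 →
        IsExpander n G ε s →
        (2 : ℝ) ^ (-(100 : ℤ)) < ε → ε < 1 →
        20 * p ^ (-(3 : ℤ)) * Real.logb 2 n ^ 13 ≤ s →
        (U.ncard : ℝ) * p ^ (-(4 : ℤ)) * Real.logb 2 n ^ 24 ≤
          ((extNbhd G U).ncard : ℝ) →
        F ⊆ G.edgeSet → F.ncard ≤ U.ncard →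
        1 - Real.exp (-(c * U.ncard * Real.logb 2 n ^ 2)) ≤
          bernoulliProb n p
            {S : Finset (Fin n) | (S.card : ℝ) / 2 <
              ((ball (G.deleteEdges F) (Real.logb 2 n ^ 4) U (↑S)).ncard : ℝ)} := by
  obtain ⟨N, hN⟩ := statement19_general (ε₀ := 2 ^ (-100 : ℤ)) (by positivity)
  refine ⟨1, one_pos, max N 2, fun n hn p ε s G U F hp0 hp1 hG hε _ hs hU _ hF => ?_⟩
  have hL : 1 ≤ Real.logb 2 n := by
    rw [Real.le_logb_iff_rpow_le one_lt_two (by norm_cast; omega), Real.rpow_one]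
    exact_mod_cast (le_max_right N 2).trans hn
  have hs' := pow_div_pow_le_zpow_neg_mul_pow hp0 hp1.le hL
    (show 5 ≤ 13 by norm_num) (show 1 ≤ 3 by norm_num)
  have hU' := pow_div_pow_le_zpow_neg_mul_pow hp0 hp1.le hL
    (show 19 ≤ 24 by norm_num) (show 2 ≤ 4 by norm_num)
  push_cast at hs' hU'
  rw [one_mul]
  refine hN n ((le_max_left N 2).trans hn) p ε s G U F hp0 hp1.le hG hε.le ?_ ?_ hF
  · rw [pow_one] at hs'
    have : 0 ≤ p ^ (-3 : ℤ) * Real.logb 2 n ^ 13 := by positivity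
    linarith
  · rw [mul_assoc] at hU
    rw [mul_div_assoc]
    exact (mul_le_mul_of_nonneg_left hU' (Nat.cast_nonneg _)).trans hU
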